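/- For the cyclic group G = Z_p (p prime) with trivial twist, the Verlinde ring of the Drinfeld double has primaries (a,b) ∈ Z_p × Z_p with fusion (a,b)(a',b') = (a+a', b+b'), S-matrix S_{(a,b),(a',b')} = (1/p) exp(2πi(ab'+a'b)/p) and T_{(a,b),(a,b)} = exp(2πi ab/p); there are exactly 2p+2 modular invariants: the 2p−2 automorphism invariants Z^{(ℓ)}: (a,b) ↦ (ℓa, ℓ^{-1}b) and Z'^{(ℓ)}: (a,b) ↦ (ℓb, ℓ^{-1}a) for ℓ ∈ Z_p^×, together with the four invariants Z^{m,n} (m,n ∈ {0,1}) with Z^{m,n}_{(a p^m, b p^n),(a' p^n, b' p^m)} = 1. -/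

import Mathlib

/-!
STATEMENT 8: classification of the modular invariants of the (untwisted)
Drinfeld double of the cyclic group `Z_p`, `p` an odd prime: there are exactly
`2p+2` of them.
-/

open scoped BigOperators
open Complex

noncomputable section

/-- `e_p(a) = exp(2 π i a / p)` for `a ∈ Z_p`. -/
def ep (p : ℕ) (a : ZMod p) : ℂ :=
  Complex.exp (2 * Real.pi * Complex.I * a.val / p)

/-- The S-matrix of the double of `Z_p`:
`S_{(a,b),(a',b')} = (1/p) exp(2 π i (a b' + a' b)/p)`. -/
def Sp (p : ℕ) : Matrix (ZMod p × ZMod p) (ZMod p × ZMod p) ℂ :=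
  fun x y => (p : ℂ)⁻¹ * ep p (x.1 * y.2 + y.1 * x.2)

open scoped Classical in
/-- The T-matrix of the double of `Z_p`: diagonal with
`T_{(a,b),(a,b)} = exp(2 π i a b / p)`. -/
def Tp (p : ℕ) : Matrix (ZMod p × ZMod p) (ZMod p × ZMod p) ℂ :=
  fun x y => if x = y then ep p (x.1 * x.2) else 0

/-- A modular invariant for the double of `Z_p`: a nonnegative-integer matrix
commuting with `S` and `T` and normalized at the vacuum. -/
def IsModInvP (p : ℕ) [NeZero p] (Z : ZMod p × ZMod p → ZMod p × ZMod p → ℕ) : Prop :=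
  (Matrix.of fun x y => (Z x y : ℂ)) * Sp p = Sp p * (Matrix.of fun x y => (Z x y : ℂ)) ∧
  (Matrix.of fun x y => (Z x y : ℂ)) * Tp p = Tp p * (Matrix.of fun x y => (Z x y : ℂ)) ∧
  Z (0, 0) (0, 0) = 1

open scoped Classical in
/-- The automorphism invariant `Z^{(ℓ)} : (a,b) ↦ (ℓ a, ℓ⁻¹ b)`. -/
def ZautP (p : ℕ) (ℓ : (ZMod p)ˣ) : ZMod p × ZMod p → ZMod p × ZMod p → ℕ :=
  fun x y => if y = ((ℓ : ZMod p) * x.1, ((ℓ⁻¹ : (ZMod p)ˣ) : ZMod p) * x.2) then 1 else 0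

open scoped Classical in
/-- The automorphism invariant `Z'^{(ℓ)} : (a,b) ↦ (ℓ b, ℓ⁻¹ a)`. -/
def ZautP' (p : ℕ) (ℓ : (ZMod p)ˣ) : ZMod p × ZMod p → ZMod p × ZMod p → ℕ :=
  fun x y => if y = ((ℓ : ZMod p) * x.2, ((ℓ⁻¹ : (ZMod p)ˣ) : ZMod p) * x.1) then 1 else 0

open scoped Classical in
/-- The four invariants `Z^{m,n}`, `m,n ∈ {0,1}`, supported on the pairs
`((a p^m, b p^{1-m}), (a' p^n, b' p^{1-n}))` for `a,b,a',b' ∈ Z_p` (in `Z_p`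
one has `p^0 = 1` and `p^1 = 0`, so e.g. `Z^{0,1}` is supported on rows
`(a, 0)` and columns `(0, b')`, with all those entries equal to `1`). -/
def ZblockP (p : ℕ) (m n : Fin 2) : ZMod p × ZMod p → ZMod p × ZMod p → ℕ :=
  fun x y =>
    if ((if m = 0 then x.2 = 0 else x.1 = 0) ∧ (if n = 0 then y.2 = 0 else y.1 = 0))
    then 1 else 0

/-!
Let `H` be the hyperbolic plane `ZMod n × ZMod n` with the form `(a, b) ↦ a * b`. A matrix `Z` on
`H` is a function on `H × H`. Commuting with `S` says that it is fixed by the Fourier transform of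
the form `H ⊕ -H`, and commuting with `T` that its support is isotropic for that form.

Let `f` be a Fourier-fixed function with values in `ℕ` and `f 0 = 1`. Each `f v` is the same sum as
`f 0` with the terms multiplied by roots of unity, so `f v ≤ f 0 = 1` by the triangle inequality,
with equality exactly when `v` is orthogonal to the support of `f`. So `f` is the indicator function
of a submodule equal to its own orthogonal complement, and modular invariants are Lagrangians of
`H ⊕ -H`.

Over a field, a Lagrangian meeting `0 × H` trivially is the graph of an isometry of `H`, that is, of
`(a, b) ↦ (ℓ a, ℓ⁻¹ b)` or `(a, b) ↦ (ℓ b, ℓ⁻¹ a)`. If it contains some `(0, y)` with `y ≠ 0`, then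
its second components are isotropic, being orthogonal to the isotropic `y`, and hence so are its
first components. It is then a product of two of the isotropic lines `a = 0` and `b = 0`.
-/

section Lagrangian

variable {R M N : Type*} [CommRing R] [AddCommGroup M] [Module R M] [AddCommGroup N] [Module R N]

/-- A Lagrangian submodule of a quadratic module: it is totally isotropic, and it contains its
own orthogonal complement, so that it is maximal with this property. -/
structure IsLagrangian (Q : QuadraticForm R M) (L : Submodule R M) : Prop where
  isotropic : ∀ v ∈ L, Q v = 0
  orthogonal_le : LinearMap.BilinForm.orthogonal Q.polarBilin L ≤ L

theorem polar_eq_zero_of_isotropic {Q : QuadraticForm R M} {L : Submodule R M}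
    (hL : ∀ v ∈ L, Q v = 0) {v w : M} (hv : v ∈ L) (hw : w ∈ L) : QuadraticMap.polar Q v w = 0 := by
  simp [QuadraticMap.polar, hL _ hv, hL _ hw, hL _ (L.add_mem hv hw)]

namespace IsLagrangian

variable {Q : QuadraticForm R M} {Q' : QuadraticForm R N} {L L' : Submodule R M}

theorem orthogonal_eq (hL : IsLagrangian Q L) :
    LinearMap.BilinForm.orthogonal Q.polarBilin L = L :=
  hL.orthogonal_le.antisymm fun _ hv _ hw => polar_eq_zero_of_isotropic hL.isotropic hw hv

theorem eq_of_le (hL : IsLagrangian Q L) (hL' : IsLagrangian Q L') (h : L ≤ L') : L = L' :=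
  h.antisymm <| hL'.orthogonal_eq.ge.trans <|
    (LinearMap.BilinForm.orthogonal_le h).trans hL.orthogonal_le

theorem neg (hL : IsLagrangian Q L) : IsLagrangian (-Q) L where
  isotropic v hv := by simp [hL.isotropic v hv]
  orthogonal_le v hv := hL.orthogonal_le fun w hw => by
    simpa [QuadraticMap.polar_neg] using hv w hw

theorem prod {P : Submodule R N} (hL : IsLagrangian Q L) (hP : IsLagrangian Q' P) :
    IsLagrangian (Q.prod Q') (L.prod P) where
  isotropic v hv := by simp [hL.isotropic _ hv.1, hP.isotropic _ hv.2]
  orthogonal_le v hv := by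
    refine ⟨hL.orthogonal_le fun w hw => ?_, hP.orthogonal_le fun w hw => ?_⟩
    · simpa using hv (w, 0) ⟨hw, P.zero_mem⟩
    · simpa using hv (0, w) ⟨L.zero_mem, hw⟩

theorem two_mul_finrank {K V : Type*} [Field K] [AddCommGroup V] [Module K V]
    [FiniteDimensional K V] {Q : QuadraticForm K V} {L : Submodule K V} (hL : IsLagrangian Q L)
    (hQ : Q.polarBilin.Nondegenerate) : 2 * Module.finrank K L = Module.finrank K V := by
  have hdim := LinearMap.BilinForm.finrank_orthogonal hQ L
  rw [hL.orthogonal_eq] at hdim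
  have := L.finrank_le
  omega

end IsLagrangian

/-- The quadratic form `(x, y) ↦ Q x - Q y` on pairs, for which graphs of isometries are totally
isotropic. -/
abbrev differenceForm (Q : QuadraticForm R M) : QuadraticForm R (M × M) := Q.prod (-Q)

variable {Q : QuadraticForm R M}

theorem polarBilin_differenceForm_apply (v w : M × M) :
    (differenceForm Q).polarBilin v w =
      QuadraticMap.polar Q v.1 w.1 - QuadraticMap.polar Q v.2 w.2 := by
  simp [sub_eq_add_neg, QuadraticMap.polar_neg]

theorem polarBilin_isSymm (Q : QuadraticForm R M) : Q.polarBilin.IsSymm :=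
  ⟨fun v w => QuadraticMap.polar_comm Q v w⟩

theorem polarBilin_nondegenerate_iff :
    Q.polarBilin.Nondegenerate ↔ ∀ v, (∀ w, QuadraticMap.polar Q v w = 0) → v = 0 :=
  (polarBilin_isSymm Q).isRefl.nondegenerate_iff_separatingLeft

theorem polarBilin_differenceForm_nondegenerate (hQ : Q.polarBilin.Nondegenerate) :
    (differenceForm Q).polarBilin.Nondegenerate := by
  rw [polarBilin_nondegenerate_iff] at hQ ⊢
  intro v hv
  refine Prod.ext (hQ _ fun w => ?_) (hQ _ fun w => ?_)
  · simpa [QuadraticMap.polar_neg] using hv (w, 0)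
  · simpa [QuadraticMap.polar_neg] using hv (0, w)

/-- The graph of an isometry, as a submodule of the space of pairs. -/
def isometryGraph (e : Q.IsometryEquiv Q) : Submodule R (M × M) :=
  LinearMap.graph (e.toLinearEquiv : M →ₗ[R] M)

theorem mem_isometryGraph {e : Q.IsometryEquiv Q} {v : M × M} :
    v ∈ isometryGraph e ↔ v.2 = e v.1 :=
  Iff.rfl

theorem isLagrangian_isometryGraph (hQ : Q.polarBilin.Nondegenerate) (e : Q.IsometryEquiv Q) :
    IsLagrangian (differenceForm Q) (isometryGraph e) where
  isotropic v hv := by simp [mem_isometryGraph.1 hv]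
  orthogonal_le v hv := by
    have hpolar (u : M) : QuadraticMap.polar Q (e u) (e v.1) = QuadraticMap.polar Q u v.1 := by
      simp only [QuadraticMap.polar, ← map_add, e.map_app]
    refine mem_isometryGraph.2 (sub_eq_zero.1 (hQ.2 _ fun u => ?_))
    obtain ⟨u, rfl⟩ := e.toLinearEquiv.surjective u
    have hu := hv (u, e u) rfl
    rw [polarBilin_differenceForm_apply] at hu
    simp only at hu
    simp [QuadraticMap.polar_sub_right, hpolar, ← sub_eq_zero.1 hu]

theorem IsLagrangian.exists_eq_graph {K V : Type*} [Field K] [AddCommGroup V] [Module K V]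
    [FiniteDimensional K V] {Q : QuadraticForm K V} {L : Submodule K (V × V)}
    (hQ : Q.polarBilin.Nondegenerate) (hL : IsLagrangian (differenceForm Q) L)
    (hker : ∀ y, (0, y) ∈ L → y = 0) :
    ∃ f : V →ₗ[K] V, (∀ x, Q (f x) = Q x) ∧ L = f.graph := by
  have hinj : Function.Injective (LinearMap.fst K V V ∘ₗ L.subtype) := by
    refine (injective_iff_map_eq_zero _).2 ?_
    rintro ⟨⟨x, y⟩, hxy⟩ (rfl : x = 0)
    simp [hker y hxy]
  have hdim : Module.finrank K L = Module.finrank K V := by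
    have := hL.two_mul_finrank (polarBilin_differenceForm_nondegenerate hQ)
    rw [Module.finrank_prod] at this
    omega
  have hsurj := (LinearMap.injective_iff_surjective_of_finrank_eq_finrank hdim).1 hinj
  obtain ⟨f, rfl⟩ := Submodule.exists_eq_graph (G := L) ⟨hinj, hsurj⟩
  refine ⟨f, fun x => ?_, rfl⟩
  have := hL.isotropic (x, f x) rfl
  simp only [QuadraticMap.prod_apply, neg_apply] at this
  exact (add_neg_eq_zero.1 this).symm

end Lagrangian

section HyperbolicPlane

variable (R : Type*) [CommRing R]

/-- The quadratic form `(a, b) ↦ a * b` of the hyperbolic plane. On `ZMod n` it is the exponent of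
the matrix `T`, and its polar form is the exponent of the matrix `S`. -/
def hyperbolicForm : QuadraticForm R (R × R) :=
  QuadraticMap.linMulLin (LinearMap.fst R R R) (LinearMap.snd R R R)

variable {R}

@[simp]
theorem hyperbolicForm_apply (x : R × R) : hyperbolicForm R x = x.1 * x.2 :=
  rfl

@[simp]
theorem polar_hyperbolicForm (x y : R × R) :
    QuadraticMap.polar (hyperbolicForm R) x y = x.1 * y.2 + y.1 * x.2 := by
  simp only [QuadraticMap.polar, hyperbolicForm_apply, Prod.fst_add, Prod.snd_add]
  ring

variable (R) in
theorem polarBilin_hyperbolicForm_nondegenerate :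
    (hyperbolicForm R).polarBilin.Nondegenerate := by
  refine polarBilin_nondegenerate_iff.2 fun x hx => Prod.ext ?_ ?_
  · simpa using hx (0, 1)
  · simpa using hx (1, 0)

/-- The isometry `(a, b) ↦ (ℓ a, ℓ⁻¹ b)` of the hyperbolic plane. -/
def dilation (ℓ : Rˣ) : (hyperbolicForm R).IsometryEquiv (hyperbolicForm R) where
  toLinearEquiv := (LinearEquiv.smulOfUnit ℓ).prodCongr (LinearEquiv.smulOfUnit ℓ⁻¹)
  map_app' x := by
    change (ℓ * x.1) * (↑ℓ⁻¹ * x.2) = x.1 * x.2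
    rw [mul_mul_mul_comm, ℓ.mul_inv, one_mul]

theorem dilation_apply (ℓ : Rˣ) (x : R × R) : dilation ℓ x = (ℓ * x.1, ↑ℓ⁻¹ * x.2) :=
  rfl

/-- The isometry `(a, b) ↦ (ℓ b, ℓ⁻¹ a)` of the hyperbolic plane. -/
def swapDilation (ℓ : Rˣ) : (hyperbolicForm R).IsometryEquiv (hyperbolicForm R) where
  toLinearEquiv := (LinearEquiv.prodComm R R R).trans (dilation ℓ).toLinearEquiv
  map_app' x := ((dilation ℓ).map_app x.swap).trans (mul_comm _ _)

theorem swapDilation_apply (ℓ : Rˣ) (x : R × R) : swapDilation ℓ x = (ℓ * x.2, ↑ℓ⁻¹ * x.1) :=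
  rfl

/-- The two isotropic lines of the hyperbolic plane: `b = 0` for `m = 0` and `a = 0` for `m = 1`. -/
def axis (m : Fin 2) : Submodule R (R × R) :=
  if m = 0 then LinearMap.ker (LinearMap.snd R R R) else LinearMap.ker (LinearMap.fst R R R)

theorem mem_axis {m : Fin 2} {x : R × R} : x ∈ axis m ↔ if m = 0 then x.2 = 0 else x.1 = 0 := by
  unfold axis
  split_ifs <;> simp

theorem isLagrangian_axis (m : Fin 2) : IsLagrangian (hyperbolicForm R) (axis m) where
  isotropic x hx := by
    rw [mem_axis] at hx
    split_ifs at hx <;> simp [hx]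
  orthogonal_le x hx := by
    fin_cases m
    · simpa [mem_axis] using hx (1, 0) (by simp [mem_axis])
    · simpa [mem_axis] using hx (0, 1) (by simp [mem_axis])

theorem isLagrangian_prod_axis (m n : Fin 2) :
    IsLagrangian (differenceForm (hyperbolicForm R)) ((axis m).prod (axis n)) :=
  (isLagrangian_axis m).prod (isLagrangian_axis n).neg

section NoZeroDivisors

variable [NoZeroDivisors R]

theorem exists_le_axis_of_isotropic {P : Submodule R (R × R)}
    (hP : ∀ x ∈ P, hyperbolicForm R x = 0) : ∃ m, P ≤ axis m := by
  have hcover : (P : Set (R × R)) ⊆ (axis (R := R) 0 : Set (R × R)) ∪ axis (R := R) 1 :=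
    fun x hx => by simpa [mem_axis, or_comm] using hP x hx
  rcases AddSubgroupClass.subset_union.1 hcover with h | h
  exacts [⟨0, h⟩, ⟨1, h⟩]

theorem isotropic_of_polar_isotropic_eq_zero {y z : R × R} (hy0 : y ≠ 0)
    (hy : hyperbolicForm R y = 0) (hyz : QuadraticMap.polar (hyperbolicForm R) y z = 0) :
    hyperbolicForm R z = 0 := by
  obtain ⟨c, d⟩ := y
  rw [polar_hyperbolicForm] at hyz
  rcases mul_eq_zero.1 hy with (rfl : c = 0) | (rfl : d = 0)
  · simp_all
  · simp_all

theorem eq_dilation_or_eq_swapDilation {f : R × R →ₗ[R] R × R}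
    (hf : ∀ x, hyperbolicForm R (f x) = hyperbolicForm R x) :
    ∃ ℓ : Rˣ, f = (dilation ℓ).toLinearEquiv ∨ f = (swapDilation ℓ).toLinearEquiv := by
  obtain ⟨⟨a, b⟩, hab⟩ : ∃ u, f (1, 0) = u := ⟨_, rfl⟩
  obtain ⟨⟨c, d⟩, hcd⟩ : ∃ u, f (0, 1) = u := ⟨_, rfl⟩
  have hab0 : a * b = 0 := by simpa [hab] using hf (1, 0)
  have hcd0 : c * d = 0 := by simpa [hcd] using hf (0, 1)
  have hpolar : a * d + c * b = 1 := by
    have hsum : f (1, 1) = (a + c, b + d) := by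
      rw [show ((1, 1) : R × R) = (1, 0) + (0, 1) by simp, map_add, hab, hcd, Prod.mk_add_mk]
    have := hf (1, 1)
    simp only [hsum, hyperbolicForm_apply] at this
    linear_combination this - hab0 - hcd0
  rcases mul_eq_zero.1 hab0 with rfl | rfl
  · have hcb : c * b = 1 := by simpa using hpolar
    have hd : d = 0 := by linear_combination b * hcd0 - d * hcb
    refine ⟨⟨c, b, hcb, by rw [mul_comm, hcb]⟩, .inr (LinearMap.prod_ext ?_ ?_)⟩ <;>
      ext <;> simp [hab, hcd, hd, swapDilation_apply]
  · have had : a * d = 1 := by simpa using hpolar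
    have hc : c = 0 := by linear_combination a * hcd0 - c * had
    refine ⟨⟨a, d, had, by rw [mul_comm, had]⟩, .inl (LinearMap.prod_ext ?_ ?_)⟩ <;>
      ext <;> simp [hab, hcd, hc, dilation_apply]

theorem IsLagrangian.exists_eq_prod_axis {L : Submodule R ((R × R) × (R × R))}
    (hL : IsLagrangian (differenceForm (hyperbolicForm R)) L) {y : R × R} (hy : (0, y) ∈ L)
    (hy0 : y ≠ 0) : ∃ m n, L = (axis m).prod (axis n) := by
  have hy_iso : hyperbolicForm R y = 0 := by simpa using hL.isotropic _ hy
  have hsnd : ∀ v ∈ L, hyperbolicForm R v.2 = 0 := by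
    intro v hv
    have hpolar : (differenceForm (hyperbolicForm R)).polarBilin (0, y) v = 0 :=
      polar_eq_zero_of_isotropic hL.isotropic hy hv
    rw [polarBilin_differenceForm_apply, QuadraticMap.polar_zero_left, zero_sub,
      neg_eq_zero] at hpolar
    exact isotropic_of_polar_isotropic_eq_zero hy0 hy_iso hpolar
  have hfst : ∀ v ∈ L, hyperbolicForm R v.1 = 0 := fun v hv => by
    simpa [hsnd v hv] using hL.isotropic v hv
  obtain ⟨m, hm⟩ := exists_le_axis_of_isotropic (P := L.map (LinearMap.fst R _ _)) <| by
    rintro _ ⟨v, hv, rfl⟩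
    exact hfst v hv
  obtain ⟨n, hn⟩ := exists_le_axis_of_isotropic (P := L.map (LinearMap.snd R _ _)) <| by
    rintro _ ⟨v, hv, rfl⟩
    exact hsnd v hv
  exact ⟨m, n, hL.eq_of_le (isLagrangian_prod_axis m n) ((Submodule.le_prod_iff _ _ _).2 ⟨hm, hn⟩)⟩

end NoZeroDivisors

theorem isLagrangian_differenceForm_hyperbolicForm_iff {K : Type*} [Field K]
    {L : Submodule K ((K × K) × (K × K))} :
    IsLagrangian (differenceForm (hyperbolicForm K)) L ↔
      (∃ ℓ : Kˣ, L = isometryGraph (dilation ℓ) ∨ L = isometryGraph (swapDilation ℓ)) ∨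
        ∃ m n, L = (axis m).prod (axis n) := by
  have hnondeg := polarBilin_hyperbolicForm_nondegenerate K
  constructor
  · intro hL
    by_cases hker : ∀ y, (0, y) ∈ L → y = 0
    · obtain ⟨f, hf, rfl⟩ := hL.exists_eq_graph hnondeg hker
      obtain ⟨ℓ, rfl | rfl⟩ := eq_dilation_or_eq_swapDilation hf
      exacts [.inl ⟨ℓ, .inl rfl⟩, .inl ⟨ℓ, .inr rfl⟩]
    · push Not at hker
      obtain ⟨y, hy, hy0⟩ := hker
      exact .inr (hL.exists_eq_prod_axis hy hy0)
  · rintro (⟨ℓ, rfl | rfl⟩ | ⟨m, n, rfl⟩)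
    exacts [isLagrangian_isometryGraph hnondeg _, isLagrangian_isometryGraph hnondeg _,
      isLagrangian_prod_axis m n]

end HyperbolicPlane

section Fourier

variable {n : ℕ} [NeZero n] {M : Type*} [AddCommGroup M] [Module (ZMod n) M]

open scoped Classical in
theorem sum_stdAddChar_linearMap [Fintype M] (φ : M →ₗ[ZMod n] ZMod n) :
    ∑ v, ZMod.stdAddChar (φ v) = if φ = 0 then (Fintype.card M : ℂ) else 0 := by
  have htrivial : ZMod.stdAddChar.compAddMonoidHom φ.toAddMonoidHom = 0 ↔ φ = 0 := by
    rw [AddChar.eq_zero_iff, LinearMap.ext_iff]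
    exact forall_congr' fun v =>
      (ZMod.injective_stdAddChar (N := n)).eq_iff' (AddChar.map_zero_eq_one _)
  rw [← if_congr htrivial rfl rfl, ← AddChar.sum_eq_ite]
  rfl

open scoped Classical in
theorem sum_stdAddChar_mem [Fintype M] (B : LinearMap.BilinForm (ZMod n) M)
    (L : Submodule (ZMod n) M) (v : M) :
    ∑ w : L, ZMod.stdAddChar (B w v) =
      if v ∈ B.orthogonal L then (Nat.card L : ℂ) else 0 := by
  have hmem : (B.flip v).comp L.subtype = 0 ↔ v ∈ B.orthogonal L := by
    simp [LinearMap.ext_iff, LinearMap.BilinForm.mem_orthogonal_iff]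
  rw [← if_congr hmem rfl rfl, Nat.card_eq_fintype_card, ← sum_stdAddChar_linearMap]
  rfl

theorem card_mul_card_orthogonal [Finite M] {B : LinearMap.BilinForm (ZMod n) M}
    (hB : B.SeparatingLeft) (L : Submodule (ZMod n) M) :
    Nat.card L * Nat.card (B.orthogonal L) = Nat.card M := by
  classical
  have := Fintype.ofFinite M
  have hzero (w : L) : B w = 0 ↔ w = 0 :=
    ⟨fun h => Subtype.ext (hB w fun v => by simp [h]), fun h => by simp [h]⟩
  have hcount : ∑ v, ∑ w : L, ZMod.stdAddChar (B w v) = (Nat.card M : ℂ) := by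
    rw [Finset.sum_comm]
    simp [sum_stdAddChar_linearMap, hzero]
  simp only [sum_stdAddChar_mem, Finset.sum_ite, Finset.sum_const_zero, add_zero, Finset.sum_const,
    ← Fintype.card_subtype, nsmul_eq_mul] at hcount
  rw [mul_comm, Nat.card_eq_fintype_card (α := B.orthogonal L)]
  exact_mod_cast hcount

theorem stdAddChar_re_le_one (a : ZMod n) : (ZMod.stdAddChar a).re ≤ 1 :=
  (Complex.re_le_norm _).trans (AddChar.norm_apply _ a).le

open scoped ComplexOrder in
theorem stdAddChar_re_eq_one_iff {a : ZMod n} : (ZMod.stdAddChar a).re = 1 ↔ a = 0 := by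
  refine ⟨fun h => ZMod.injective_stdAddChar ?_, fun h => by simp [h]⟩
  have hnorm : ‖ZMod.stdAddChar a‖ = 1 := AddChar.norm_apply _ a
  have hpos : 0 ≤ ZMod.stdAddChar a := Complex.re_eq_norm.1 (h.trans hnorm.symm)
  rw [Complex.eq_coe_norm_of_nonneg hpos, hnorm, Complex.ofReal_one, AddChar.map_zero_eq_one]

theorem one_sub_stdAddChar_re_mul_nonneg (a : ZMod n) (k : ℕ) :
    0 ≤ (1 - (ZMod.stdAddChar a).re) * k :=
  mul_nonneg (sub_nonneg.2 (stdAddChar_re_le_one _)) (Nat.cast_nonneg _)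

variable [Fintype M]

/-- `f` is fixed by the Fourier transform of the bilinear form `B`, normalized by the factor
`1 / c`. -/
def IsFourierFixed (B : LinearMap.BilinForm (ZMod n) M) (c : ℕ) (f : M → ℕ) : Prop :=
  ∀ v, (c : ℂ) * f v = ∑ w, ZMod.stdAddChar (B w v) * f w

variable {B : LinearMap.BilinForm (ZMod n) M} {c : ℕ} {f : M → ℕ}

theorem isFourierFixed_indicator {L : Submodule (ZMod n) M} (hB : B.SeparatingLeft)
    (hL : B.orthogonal L = L) (hc : c ^ 2 = Nat.card M) :
    IsFourierFixed B c (Set.indicator L 1) := by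
  classical
  have hcard : Nat.card L = c := by
    have := card_mul_card_orthogonal hB L
    rw [hL, ← sq, ← hc] at this
    exact Nat.pow_left_injective two_ne_zero this
  intro v
  have hsum := sum_stdAddChar_mem B L v
  rw [hL, hcard] at hsum
  simp only [Set.indicator_apply, SetLike.mem_coe, Pi.one_apply, Nat.cast_ite, Nat.cast_one,
    Nat.cast_zero, mul_ite, mul_one, mul_zero, ← hsum, Finset.sum_ite, Finset.sum_const_zero,
    add_zero]
  exact (Finset.sum_subtype {w | w ∈ L} (fun w => Finset.mem_filter_univ w) fun w =>
    ZMod.stdAddChar (B w v)).symm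

namespace IsFourierFixed

theorem sum_eq (hf : IsFourierFixed B c f) (h0 : f 0 = 1) : ∑ w, f w = c := by
  have := hf 0
  simp only [h0, map_zero, AddChar.map_zero_eq_one, one_mul, Nat.cast_one, mul_one] at this
  exact_mod_cast this.symm

theorem sum_one_sub_re_mul (hf : IsFourierFixed B c f) (h0 : f 0 = 1) (v : M) :
    ∑ w, (1 - (ZMod.stdAddChar (B w v)).re) * f w = c * (1 - f v : ℝ) := by
  have hre : (c * f v : ℝ) = ∑ w, (ZMod.stdAddChar (B w v)).re * f w := by
    simpa using congrArg Complex.re (hf v)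
  have hsum : ∑ w, (f w : ℝ) = c := by exact_mod_cast hf.sum_eq h0
  simp only [sub_mul, one_mul, Finset.sum_sub_distrib, hsum, ← hre]
  ring

theorem normalization_pos (hf : IsFourierFixed B c f) (h0 : f 0 = 1) : (0 : ℝ) < c := by
  rw [← hf.sum_eq h0]
  exact_mod_cast Finset.sum_pos' (fun _ _ => Nat.zero_le _) ⟨0, Finset.mem_univ _, by simp [h0]⟩

theorem le_one (hf : IsFourierFixed B c f) (h0 : f 0 = 1) (v : M) : f v ≤ 1 := by
  have hnonneg : 0 ≤ c * (1 - f v : ℝ) := hf.sum_one_sub_re_mul h0 v ▸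
    Finset.sum_nonneg fun _ _ => one_sub_stdAddChar_re_mul_nonneg _ _
  exact_mod_cast sub_nonneg.1 (nonneg_of_mul_nonneg_right hnonneg (hf.normalization_pos h0))

theorem eq_one_iff (hf : IsFourierFixed B c f) (h0 : f 0 = 1) (v : M) :
    f v = 1 ↔ ∀ w, f w ≠ 0 → B w v = 0 := by
  calc f v = 1 ↔ c * (1 - f v : ℝ) = 0 := by
        rw [mul_eq_zero, or_iff_right (hf.normalization_pos h0).ne', sub_eq_zero,
          eq_comm (a := (1 : ℝ)), Nat.cast_eq_one]
    _ ↔ ∀ w, (1 - (ZMod.stdAddChar (B w v)).re) * f w = 0 := by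
        rw [← hf.sum_one_sub_re_mul h0 v,
          Finset.sum_eq_zero_iff_of_nonneg fun _ _ => one_sub_stdAddChar_re_mul_nonneg _ _]
        simp
    _ ↔ ∀ w, f w ≠ 0 → B w v = 0 := by
        simp [sub_eq_zero, eq_comm (a := (1 : ℝ)), stdAddChar_re_eq_one_iff, or_iff_not_imp_right]

theorem exists_eq_indicator (hf : IsFourierFixed B c f) (h0 : f 0 = 1) :
    ∃ L : Submodule (ZMod n) M, B.orthogonal L = L ∧ f = Set.indicator L 1 := by
  have hsupp (v : M) : f v ≠ 0 ↔ ∀ w, f w ≠ 0 → B w v = 0 := by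
    rw [← hf.eq_one_iff h0]
    have := hf.le_one h0 v
    omega
  let L : Submodule (ZMod n) M :=
    { carrier := Function.support f
      zero_mem' := by simp [h0]
      add_mem' := fun {u v} hu hv => (hsupp _).2 fun w hw => by
        rw [map_add, (hsupp u).1 hu w hw, (hsupp v).1 hv w hw, add_zero]
      smul_mem' := fun a v hv => (hsupp _).2 fun w hw => by
        rw [map_smul, (hsupp v).1 hv w hw, smul_zero] }
  refine ⟨L, Submodule.ext fun v => (hsupp v).symm, funext fun v => ?_⟩
  by_cases hv : f v = 0
  · rw [hv, Set.indicator_of_notMem (s := (L : Set M)) (not_not.2 hv)]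
  · rw [Set.indicator_of_mem (s := (L : Set M)) hv, Pi.one_apply]
    exact (hf.le_one h0 v).antisymm (Nat.pos_of_ne_zero hv)

end IsFourierFixed

end Fourier

section ModularInvariants

variable {n : ℕ}

/-- The 0-1 matrix of a relation between two copies of `M`, given as a submodule of `M × M`. -/
def incidence {R M : Type*} [Semiring R] [AddCommMonoid M] [Module R M]
    (L : Submodule R (M × M)) : M → M → ℕ :=
  Function.curry (Set.indicator L 1)

theorem ZautP_eq_incidence (ℓ : (ZMod n)ˣ) :
    ZautP n ℓ = incidence (isometryGraph (dilation ℓ)) := by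
  classical
  ext x y
  simp [ZautP, incidence, Set.indicator_apply, mem_isometryGraph, dilation_apply]

theorem ZautP'_eq_incidence (ℓ : (ZMod n)ˣ) :
    ZautP' n ℓ = incidence (isometryGraph (swapDilation ℓ)) := by
  classical
  ext x y
  simp [ZautP', incidence, Set.indicator_apply, mem_isometryGraph, swapDilation_apply]

theorem ZblockP_eq_incidence (i j : Fin 2) :
    ZblockP n i j = incidence ((axis i).prod (axis j)) := by
  classical
  ext x y
  simp [ZblockP, incidence, Set.indicator_apply, mem_axis]

variable [NeZero n]

theorem ep_eq_stdAddChar (a : ZMod n) : ep n a = ZMod.stdAddChar a := by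
  rw [ZMod.stdAddChar_apply, ZMod.toCircle_apply]
  rfl

theorem Sp_apply (x y : ZMod n × ZMod n) :
    Sp n x y = (n : ℂ)⁻¹ * ZMod.stdAddChar (QuadraticMap.polar (hyperbolicForm (ZMod n)) x y) := by
  rw [Sp, ep_eq_stdAddChar, polar_hyperbolicForm]

theorem star_Sp_apply (x y : ZMod n × ZMod n) :
    star (Sp n) x y =
      (n : ℂ)⁻¹ * ZMod.stdAddChar (-QuadraticMap.polar (hyperbolicForm (ZMod n)) x y) := by
  rw [Matrix.star_apply, Sp_apply, QuadraticMap.polar_comm, AddChar.map_neg_eq_conj]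
  simp

variable (n) in
theorem Sp_mem_unitary : Sp n ∈ unitary (Matrix (ZMod n × ZMod n) (ZMod n × ZMod n) ℂ) := by
  classical
  refine Matrix.mem_unitaryGroup_iff.2 (Matrix.ext fun x y => ?_)
  have hterm (z : ZMod n × ZMod n) : Sp n x z * star (Sp n) z y =
      ((n : ℂ) ^ 2)⁻¹ * ZMod.stdAddChar ((hyperbolicForm (ZMod n)).polarBilin (x - y) z) := by
    rw [Sp_apply, star_Sp_apply, mul_mul_mul_comm, ← AddChar.map_add_eq_mul,
      QuadraticMap.polar_comm _ z y, QuadraticMap.polarBilin_apply_apply,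
      QuadraticMap.polar_sub_left, sub_eq_add_neg, sq, mul_inv]
  have hzero : (hyperbolicForm (ZMod n)).polarBilin (x - y) = 0 ↔ x = y := by
    refine ⟨fun h => sub_eq_zero.1 ?_, fun h => by simp [h]⟩
    exact (polarBilin_hyperbolicForm_nondegenerate (ZMod n)).1 _ fun z => by rw [h]; rfl
  rw [Matrix.mul_apply, Finset.sum_congr rfl fun z _ => hterm z, ← Finset.mul_sum,
    sum_stdAddChar_linearMap, if_congr hzero rfl rfl, Matrix.one_apply, mul_ite, mul_zero]
  simp [← sq, NeZero.ne n]

theorem Sp_mul_mul_star_Sp_apply (Z : ZMod n × ZMod n → ZMod n × ZMod n → ℕ)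
    (x y : ZMod n × ZMod n) :
    (Sp n * (Matrix.of fun x y => (Z x y : ℂ)) * star (Sp n)) x y = ((n ^ 2 : ℕ) : ℂ)⁻¹ *
      ∑ w, ZMod.stdAddChar ((differenceForm (hyperbolicForm (ZMod n))).polarBilin w (x, y)) *
        ((Function.uncurry Z w : ℕ) : ℂ) := by
  rw [Fintype.sum_prod_type_right, Finset.mul_sum, Matrix.mul_apply]
  refine Finset.sum_congr rfl fun w₂ _ => ?_
  rw [Matrix.mul_apply, Finset.sum_mul, Finset.mul_sum]
  refine Finset.sum_congr rfl fun w₁ _ => ?_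
  rw [Sp_apply, star_Sp_apply, polarBilin_differenceForm_apply, sub_eq_add_neg,
    AddChar.map_add_eq_mul, QuadraticMap.polar_comm _ x w₁]
  simp only [Matrix.of_apply, Function.uncurry_apply_pair, Nat.cast_pow]
  ring

variable {Z : ZMod n × ZMod n → ZMod n × ZMod n → ℕ}

theorem mul_Sp_eq_Sp_mul_iff :
    (Matrix.of fun x y => (Z x y : ℂ)) * Sp n = Sp n * (Matrix.of fun x y => (Z x y : ℂ)) ↔
      IsFourierFixed (differenceForm (hyperbolicForm (ZMod n))).polarBilin (n ^ 2)
        (Function.uncurry Z) := by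
  let A : Matrix (ZMod n × ZMod n) (ZMod n × ZMod n) ℂ := Matrix.of fun x y => (Z x y : ℂ)
  have hunit := Unitary.mem_iff.1 (Sp_mem_unitary n)
  have hconj : A * Sp n = Sp n * A ↔ A = Sp n * A * star (Sp n) := by
    constructor <;> intro h
    · rw [← h, mul_assoc, hunit.2, mul_one]
    · conv_lhs => rw [h, mul_assoc, hunit.1, mul_one]
  have hn : ((n ^ 2 : ℕ) : ℂ) ≠ 0 := by simp [NeZero.ne n]
  rw [hconj, ← Matrix.ext_iff, IsFourierFixed]
  refine Iff.trans (forall₂_congr fun x y => ?_) Prod.forall.symm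
  rw [Sp_mul_mul_star_Sp_apply, eq_inv_mul_iff_mul_eq₀ hn]
  rfl

theorem mul_Tp_eq_Tp_mul_iff :
    (Matrix.of fun x y => (Z x y : ℂ)) * Tp n = Tp n * (Matrix.of fun x y => (Z x y : ℂ)) ↔
      ∀ v, Function.uncurry Z v ≠ 0 → differenceForm (hyperbolicForm (ZMod n)) v = 0 := by
  classical
  have hdiag : Tp n = Matrix.diagonal fun x => ZMod.stdAddChar (hyperbolicForm (ZMod n) x) := by
    ext x y
    rw [Tp, ep_eq_stdAddChar, Matrix.diagonal_apply]
    rfl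
  rw [hdiag, ← Matrix.ext_iff]
  refine Iff.trans (forall₂_congr fun x y => ?_) Prod.forall.symm
  have hdiff : differenceForm (hyperbolicForm (ZMod n)) (x, y) =
      hyperbolicForm (ZMod n) x - hyperbolicForm (ZMod n) y := (sub_eq_add_neg _ _).symm
  rw [Matrix.mul_diagonal, Matrix.diagonal_mul, mul_comm, mul_eq_mul_right_iff, or_comm,
    or_iff_not_imp_left, ZMod.injective_stdAddChar.eq_iff, hdiff, sub_eq_zero,
    eq_comm (a := hyperbolicForm (ZMod n) y)]
  simp

theorem isModInvP_iff :
    IsModInvP n Z ↔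
      ∃ L, IsLagrangian (differenceForm (hyperbolicForm (ZMod n))) L ∧ Z = incidence L := by
  rw [IsModInvP, mul_Sp_eq_Sp_mul_iff, mul_Tp_eq_Tp_mul_iff]
  constructor
  · rintro ⟨hS, hT, h0⟩
    obtain ⟨L, hL, hZ⟩ := hS.exists_eq_indicator h0
    refine ⟨L, ⟨fun v hv => hT v ?_, hL.le⟩, ?_⟩
    · rw [hZ]
      simpa using hv
    · rw [incidence, ← hZ, Function.curry_uncurry]
  · rintro ⟨L, hL, rfl⟩
    rw [incidence, Function.uncurry_curry]
    refine ⟨isFourierFixed_indicator ?_ hL.orthogonal_eq ?_, fun v hv => hL.isotropic v ?_, ?_⟩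
    · exact (polarBilin_differenceForm_nondegenerate
        (polarBilin_hyperbolicForm_nondegenerate _)).1
    · simp [← pow_mul, ← sq]
    · exact Set.mem_of_indicator_ne_zero hv
    · exact Set.indicator_of_mem (SetLike.mem_coe.2 L.zero_mem) 1

end ModularInvariants

section Counting

variable {n : ℕ}

theorem ZautP_injective : Function.Injective (ZautP n) := by
  intro ℓ ℓ' h
  have hentry := congrFun₂ h (1, 0) (↑ℓ, 0)
  simp only [ZautP, mul_one, mul_zero, if_true] at hentry
  simpa [Units.ext_iff] using hentry

theorem ZautP'_injective : Function.Injective (ZautP' n) := by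
  intro ℓ ℓ' h
  have hentry := congrFun₂ h (0, 1) (↑ℓ, 0)
  simp only [ZautP', mul_one, mul_zero, if_true] at hentry
  simpa [Units.ext_iff] using hentry

variable [Nontrivial (ZMod n)]

theorem ZblockP_injective : Function.Injective (Function.uncurry (ZblockP n)) := by
  rintro ⟨i, j⟩ ⟨i', j'⟩ h
  have hrow (i j : Fin 2) : ZblockP n i j (1, 0) 0 = if i = 0 then 1 else 0 := by simp [ZblockP]
  have hcol (i j : Fin 2) : ZblockP n i j 0 (1, 0) = if j = 0 then 1 else 0 := by simp [ZblockP]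
  have hi := congrFun₂ h (1, 0) 0
  have hj := congrFun₂ h 0 (1, 0)
  simp only [Function.uncurry_apply_pair, hrow, hcol] at hi hj
  refine Prod.ext ?_ ?_ <;> grind

theorem ZautP_ne_ZautP' (ℓ ℓ' : (ZMod n)ˣ) : ZautP n ℓ ≠ ZautP' n ℓ' := by
  intro h
  have hentry := congrFun₂ h (1, 0) (↑ℓ, 0)
  simp [-Units.val_inv_eq_inv_val, ZautP, ZautP'] at hentry

theorem ZautP_ne_ZblockP (ℓ : (ZMod n)ˣ) (i j : Fin 2) : ZautP n ℓ ≠ ZblockP n i j := by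
  intro h
  have hfst : j ≠ 0 := by simpa [ZautP, ZblockP] using congrFun₂ h 0 (1, 0)
  have hsnd : j = 0 := by simpa [ZautP, ZblockP] using congrFun₂ h 0 (0, 1)
  exact hfst hsnd

theorem ZautP'_ne_ZblockP (ℓ : (ZMod n)ˣ) (i j : Fin 2) : ZautP' n ℓ ≠ ZblockP n i j := by
  intro h
  have hfst : j ≠ 0 := by simpa [ZautP', ZblockP] using congrFun₂ h 0 (1, 0)
  have hsnd : j = 0 := by simpa [ZautP', ZblockP] using congrFun₂ h 0 (0, 1)
  exact hfst hsnd

/-- The family of all modular invariants of the double of `ZMod p`, indexed by two copies of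
`(ZMod p)ˣ` for the automorphism invariants and by `Fin 2 × Fin 2` for the block invariants. -/
def invariantFamily (n : ℕ) :
    ((ZMod n)ˣ ⊕ (ZMod n)ˣ) ⊕ Fin 2 × Fin 2 → ZMod n × ZMod n → ZMod n × ZMod n → ℕ :=
  Sum.elim (Sum.elim (ZautP n) (ZautP' n)) (Function.uncurry (ZblockP n))

theorem invariantFamily_injective : Function.Injective (invariantFamily n) := by
  refine (ZautP_injective.sumElim ZautP'_injective ZautP_ne_ZautP').sumElim ZblockP_injective ?_
  rintro (ℓ | ℓ) ⟨i, j⟩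
  exacts [ZautP_ne_ZblockP ℓ i j, ZautP'_ne_ZblockP ℓ i j]

theorem range_invariantFamily (n : ℕ) :
    Set.range (invariantFamily n) =
      {Z | (∃ ℓ : (ZMod n)ˣ, Z = ZautP n ℓ ∨ Z = ZautP' n ℓ) ∨ ∃ i j, Z = ZblockP n i j} := by
  ext Z
  simp [invariantFamily, Set.Sum.elim_range, exists_or, eq_comm]

theorem ncard_range_invariantFamily (p : ℕ) [Fact p.Prime] :
    (Set.range (invariantFamily p)).ncard = 2 * p + 2 := by
  rw [← Set.image_univ, Set.ncard_image_of_injective _ invariantFamily_injective, Set.ncard_univ]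
  have := (Fact.out : p.Prime).two_le
  simp only [Nat.card_sum, Nat.card_prod, Nat.card_fin, Nat.card_eq_fintype_card (α := (ZMod p)ˣ),
    ZMod.card_units]
  omega

end Counting

theorem setOf_isModInvP (p : ℕ) [Fact p.Prime] :
    {Z | IsModInvP p Z} = Set.range (invariantFamily p) := by
  rw [range_invariantFamily]
  ext Z
  simp only [Set.mem_ofPred_eq, isModInvP_iff, isLagrangian_differenceForm_hyperbolicForm_iff,
    ZautP_eq_incidence, ZautP'_eq_incidence, ZblockP_eq_incidence]
  constructor
  · rintro ⟨L, ⟨ℓ, rfl | rfl⟩ | ⟨i, j, rfl⟩, rfl⟩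
    exacts [.inl ⟨ℓ, .inl rfl⟩, .inl ⟨ℓ, .inr rfl⟩, .inr ⟨i, j, rfl⟩]
  · rintro (⟨ℓ, rfl | rfl⟩ | ⟨i, j, rfl⟩)
    exacts [⟨_, .inl ⟨ℓ, .inl rfl⟩, rfl⟩, ⟨_, .inl ⟨ℓ, .inr rfl⟩, rfl⟩, ⟨_, .inr ⟨i, j, rfl⟩, rfl⟩]

theorem stmt_8_general (p : ℕ) [Fact p.Prime] :
    {Z : ZMod p × ZMod p → ZMod p × ZMod p → ℕ | IsModInvP p Z}
      = {Z | (∃ ℓ : (ZMod p)ˣ, Z = ZautP p ℓ ∨ Z = ZautP' p ℓ) ∨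
             (∃ m n : Fin 2, Z = ZblockP p m n)} ∧
    {Z : ZMod p × ZMod p → ZMod p × ZMod p → ℕ | IsModInvP p Z}.ncard = 2 * p + 2 := by
  rw [setOf_isModInvP]
  exact ⟨range_invariantFamily p, ncard_range_invariantFamily p⟩

/-- for `p` an odd prime, the modular invariants of the double of
`Z_p` are exactly the `2p-2` automorphism invariants `Z^{(ℓ)}`, `Z'^{(ℓ)}`
(`ℓ ∈ Z_p^×`) together with the four block invariants `Z^{m,n}`; there are
exactly `2p+2` of them. -/
theorem stmt_8 (p : ℕ) [Fact p.Prime] (hp : p ≠ 2) :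
    {Z : ZMod p × ZMod p → ZMod p × ZMod p → ℕ | IsModInvP p Z}
      = {Z | (∃ ℓ : (ZMod p)ˣ, Z = ZautP p ℓ ∨ Z = ZautP' p ℓ) ∨
             (∃ m n : Fin 2, Z = ZblockP p m n)} ∧
    {Z : ZMod p × ZMod p → ZMod p × ZMod p → ℕ | IsModInvP p Z}.ncard = 2 * p + 2 :=
  stmt_8_general p

end
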